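/- Let T = {1234, 1423, 2341} (patterns of length 4). Then the generating function for T-avoiders satisfies, as formal power series over ℚ, x^2·(1-x)·(1-2x)·F_T(x) = (1 - 7x + 18x^2 - 19x^3 + 6x^4)·C(x) - (1 - 6x + 12x^2 - 8x^3 + x^4), where C(x) is the Catalan number generating function. -/

import Mathlib

open PowerSeries

/-- A permutation `π` of `{0,…,n-1}` contains the pattern `σ` (of length `k`) if there is an
order-embedding of positions on which the values of `π` appear in the same relative order as
the values of `σ`. -/
def ContainsPattern {n k : ℕ} (π : Equiv.Perm (Fin n)) (σ : Fin k → Fin k) : Prop :=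
  ∃ f : Fin k ↪o Fin n, ∀ a b : Fin k, σ a < σ b ↔ π (f a) < π (f b)

/-- The number of permutations of length `n` avoiding every pattern in `T`. -/
noncomputable def avoiderCount (T : Set (Fin 4 → Fin 4)) (n : ℕ) : ℕ :=
  Nat.card {π : Equiv.Perm (Fin n) // ∀ σ ∈ T, ¬ ContainsPattern π σ}

/-- The generating function `F_T(x) = ∑_n |S_n(T)| xⁿ` over `ℚ`. -/
noncomputable def avoiderGF (T : Set (Fin 4 → Fin 4)) : PowerSeries ℚ :=
  PowerSeries.mk fun n => (avoiderCount T n : ℚ)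

/-- The generating function of the Catalan numbers over `ℚ`. -/
noncomputable def catalanGF : PowerSeries ℚ :=
  PowerSeries.mk fun n => (catalan n : ℚ)

/-!
Complementing and then inverting a permutation turns avoidance of `1234, 1423, 2341` into avoidance
of `4321, 2431, 3214`. The avoiders of the latter triple are grown by inserting a new minimum
letter. A position where this creates no forbidden pattern is called active, and the active
positions of a child can be read off from those of its parent together with the increasing runs at
its beginning. This gives a generating tree in which the subtree below a word depends only on its
label: an interval of active sites, such an interval plus a detached site, two adjacent increasing
runs, or a fully increasing word. The resulting system of equations for the label generating
functions is solved explicitly by powers of `C`, because `C = 1 + x C²` makes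
`x ∑_{i < k} C ^ (i + 2)` telescope to `C ^ k - 1`.
-/

/-! ### Generating trees -/

section GeneratingTree

variable {α β : Type*}

/-- The number of nodes at depth `m` below `a` in the tree in which the children of a node are given
by the multiset-valued function `children`. -/
def levelCount (children : α → Multiset α) : ℕ → α → ℕ
  | 0, _ => 1
  | m + 1, a => ((children a).map (levelCount children m)).sum

theorem levelCount_eq_of_rel {R : α → β → Prop} {children : α → Multiset α}
    {children' : β → Multiset β}
    (hR : ∀ a b, R a b → Multiset.Rel R (children a) (children' b)) (m : ℕ) :
    ∀ a b, R a b → levelCount children m a = levelCount children' m b := by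
  induction m with
  | zero => exact fun _ _ _ => rfl
  | succ m ih =>
    intro a b hab
    have hmap := Multiset.rel_map.2 ((hR a b hab).mono fun a' _ b' _ => ih a' b')
    exact congrArg Multiset.sum (Multiset.rel_eq.1 hmap)

theorem coeff_eq_levelCount {R : Type*} [Semiring R] {children : α → Multiset α}
    {f : α → PowerSeries R} (hf : ∀ a, f a = 1 + X * ((children a).map f).sum) (m : ℕ) :
    ∀ a, coeff m (f a) = levelCount children m a := by
  induction m with
  | zero => intro a; rw [hf a]; simp [levelCount]
  | succ m ih =>
    intro a
    rw [hf a, map_add, coeff_succ_X_mul, coeff_one, if_neg m.succ_ne_zero, zero_add,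
      map_multiset_sum, levelCount, Nat.cast_multiset_sum, Multiset.map_map, Multiset.map_map]
    simp only [Function.comp_def, ih]

end GeneratingTree

section RangeMultiset

variable {α β : Type*}

theorem multiset_range_succ_eq_cons_map (k : ℕ) :
    Multiset.range (k + 1) = 0 ::ₘ (Multiset.range k).map Nat.succ :=
  congrArg _ List.range_succ_eq_map

theorem multiset_range_add_two (k : ℕ) :
    Multiset.range (k + 2) = 0 ::ₘ (k + 1) ::ₘ (Multiset.range k).map Nat.succ := by
  rw [multiset_range_succ_eq_cons_map, Multiset.range_succ, Multiset.map_cons]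

theorem multiset_rel_map_map_range {R : α → β → Prop} {f : ℕ → α} {g : ℕ → β} {k : ℕ}
    (h : ∀ i < k, R (f i) (g i)) :
    Multiset.Rel R ((Multiset.range k).map f) ((Multiset.range k).map g) :=
  Multiset.rel_map.2 <| Multiset.rel_refl_of_refl_on fun i hi => h i (Multiset.mem_range.1 hi)

end RangeMultiset

/-! ### Insertion of a new minimum -/

/-- The position of the letter at position `a` after a letter has been inserted at position `v`. -/
def skipAt (v a : ℕ) : ℕ := if a < v then a else a + 1

/-- The inverse of `skipAt v` on positions other than `v`. -/
def unskipAt (v a : ℕ) : ℕ := if a < v then a else a - 1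

/-- The word obtained from `q` by raising every letter by one and inserting the letter `0` so that
`v` letters precede it. Words are functions on `ℕ`; the length is carried separately. -/
def insertMin (v : ℕ) (q : ℕ → ℕ) (a : ℕ) : ℕ :=
  if a = v then 0 else q (unskipAt v a) + 1

/-- The word `q 0, …, q (n - 1)` avoids `4321`, `2431` and `3214`. -/
def AvoidsTriple (n : ℕ) (q : ℕ → ℕ) : Prop :=
  ∀ a b c d, a < b → b < c → c < d → d < n →
    ¬(q d < q c ∧ q c < q b ∧ q b < q a) ∧
    ¬(q d < q a ∧ q a < q c ∧ q c < q b) ∧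
    ¬(q c < q b ∧ q b < q a ∧ q a < q d)

/-- The site `v` of the word `q 0, …, q (n - 1)` is active if no occurrence of `4321`, `2431` or
`3214` uses a new minimum inserted there: the minimum is the last letter of the first two patterns
and the third letter of `3214`. -/
def IsActive (n : ℕ) (q : ℕ → ℕ) (v : ℕ) : Prop :=
  ∀ a b c, a < b → b < c → c < n →
    (c < v → ¬(q c < q b ∧ q b < q a)) ∧
    (c < v → ¬(q a < q c ∧ q c < q b)) ∧
    (b < v → v ≤ c → ¬(q b < q a ∧ q a < q c))

section InsertMin

open Set

variable {n v u : ℕ} {q : ℕ → ℕ}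

theorem insertMin_self (v : ℕ) (q : ℕ → ℕ) : insertMin v q v = 0 := by simp [insertMin]

theorem insertMin_skipAt (v a : ℕ) (q : ℕ → ℕ) : insertMin v q (skipAt v a) = q a + 1 := by
  grind [insertMin, skipAt, unskipAt]

theorem avoidsTriple_insertMin_iff (hv : v ≤ n) :
    AvoidsTriple (n + 1) (insertMin v q) ↔ AvoidsTriple n q ∧ IsActive n q v := by
  refine ⟨fun h => ⟨fun a b c d _ _ _ _ => ?_, fun a b c _ _ _ => ?_⟩, ?_⟩
  · have := h (skipAt v a) (skipAt v b) (skipAt v c) (skipAt v d)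
    grind [insertMin_skipAt, skipAt]
  · have := h (skipAt v a) (skipAt v b) (skipAt v c) v
    have := h (skipAt v a) (skipAt v b) v (skipAt v c)
    grind [insertMin_skipAt, insertMin_self, skipAt]
  · rintro ⟨havoid, hactive⟩ a b c d _ _ _ _
    rcases eq_or_ne c v with rfl | hcv
    · have := hactive a b (d - 1)
      grind [insertMin, unskipAt]
    rcases eq_or_ne d v with rfl | hdv
    · have := hactive a b c
      grind [insertMin, unskipAt]
    · have := havoid (unskipAt v a) (unskipAt v b) (unskipAt v c) (unskipAt v d)
      clear havoid hactive
      grind [insertMin, unskipAt]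

theorem isActive_insertMin_iff_of_le (hv : v ≤ n) (hu : u ≤ v) :
    IsActive (n + 1) (insertMin v q) u ↔ IsActive n q u := by
  refine ⟨fun h a b c _ _ _ => ?_, fun h a b c _ _ _ => ?_⟩
  · have := h (skipAt v a) (skipAt v b) (skipAt v c)
    grind [insertMin_skipAt, skipAt]
  · have := h (unskipAt v a) (unskipAt v b) (unskipAt v c)
    grind [insertMin, unskipAt]

theorem isActive_insertMin_iff_of_lt (hvu : v < u) (hu : u ≤ n + 1) :
    IsActive (n + 1) (insertMin v q) u ↔ IsActive n q (u - 1) ∧ MonotoneOn q (Iio v) ∧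
      MonotoneOn q (Ico v (u - 1)) ∧ ∀ a c, a < v → u - 1 ≤ c → c < n → q c ≤ q a := by
  refine ⟨fun h => ⟨fun a b c _ _ _ => ?_, fun a ha b hb hab => ?_, fun a ha b hb hab => ?_,
    fun a c _ _ _ => ?_⟩, ?_⟩
  · have := h (skipAt v a) (skipAt v b) (skipAt v c)
    grind [insertMin_skipAt, skipAt]
  · have := h (skipAt v a) (skipAt v b) v
    grind [insertMin_skipAt, insertMin_self, skipAt]
  · have := h v (skipAt v a) (skipAt v b)
    grind [insertMin_skipAt, insertMin_self, skipAt]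
  · have := h (skipAt v a) v (skipAt v c)
    grind [insertMin_skipAt, insertMin_self, skipAt]
  · rintro ⟨hactive, hleft, hmiddle, hright⟩ a b c _ _ _
    have := hactive (unskipAt v a) (unskipAt v b) (unskipAt v c)
    have := @hleft (unskipAt v a)
    have := @hmiddle (unskipAt v b)
    grind [insertMin, unskipAt]

end InsertMin

/-! ### Classes of words -/

section Words

open Set

/-- A word of length `n` whose active sites are `0, …, k + 1`, beginning with `k + 1` increasing
letters and having a later letter above its first one. The listed sites are active because all
sites up to the end of the first increasing run are. -/
structure IsIntervalWord (n k : ℕ) (q : ℕ → ℕ) : Prop where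
  strictMonoOn : StrictMonoOn q (Iio (k + 1))
  exists_gt : ∃ z, k < z ∧ z < n ∧ q 0 < q z
  not_isActive : ∀ u, k + 1 < u → u ≤ n → ¬IsActive n q u

/-- A word of length `n` whose active sites are `0, …, j + 1` and the detached site `s`. It begins
with two increasing runs of lengths `j + 1` and `s - j - 1`, the first letter of the word lying
between the smallest and the largest letter of the second run and above all letters from `s` on. -/
structure IsSplitWord (n j s : ℕ) (q : ℕ → ℕ) : Prop where
  lt_site : j + 2 < s
  site_le : s ≤ n
  strictMonoOn_left : StrictMonoOn q (Iio (j + 1))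
  strictMonoOn_middle : StrictMonoOn q (Ico (j + 1) s)
  middle_lt : q (j + 1) < q 0
  lt_middle : q 0 < q (s - 1)
  right_lt : ∀ z, s ≤ z → z < n → q z < q 0
  isActive : IsActive n q s
  not_isActive : ∀ u, j + 1 < u → u ≤ n → u ≠ s → ¬IsActive n q u

/-- A word of length `n` whose active sites are `0, …, j + b + 2`. It begins with two increasing
runs of lengths `j + 1` and `b + 1`, and all letters after the first run are below the first
letter. -/
structure IsDoubleWord (n j b : ℕ) (q : ℕ → ℕ) : Prop where
  le_length : j + b + 2 ≤ n
  strictMonoOn_left : StrictMonoOn q (Iio (j + 1))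
  strictMonoOn_middle : StrictMonoOn q (Ico (j + 1) (j + b + 2))
  lt_zero : ∀ z, j < z → z < n → q z < q 0
  not_isActive : ∀ u, j + b + 2 < u → u ≤ n → ¬IsActive n q u

variable {n v k i j b s : ℕ} {q : ℕ → ℕ}

theorem isActive_of_strictMonoOn (hq : StrictMonoOn q (Iio k)) (hv : v ≤ k) :
    IsActive n q v := by
  intro a b c hab hbc _
  have := @hq a
  have := @hq b
  grind

theorem strictMonoOn_insertMin_Iio_succ_zero (hq : StrictMonoOn q (Iio k)) :
    StrictMonoOn (insertMin 0 q) (Iio (k + 1)) := by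
  intro a _ b hb hab
  have := @hq (a - 1)
  grind [insertMin, unskipAt]

theorem strictMonoOn_insertMin_Iio (hq : StrictMonoOn q (Iio k)) (hv : v ≤ k) :
    StrictMonoOn (insertMin v q) (Iio v) := by
  intro a ha b hb hab
  have := @hq a
  grind [insertMin, unskipAt]

theorem strictMonoOn_insertMin_Ico (hq : StrictMonoOn q (Ico v k)) :
    StrictMonoOn (insertMin v q) (Ico v (k + 1)) := by
  intro a ha b hb hab
  have := @hq (a - 1)
  grind [insertMin, unskipAt]

theorem isIntervalWord_insertMin_zero (hk : k < n) (hq : StrictMonoOn q (Iio k))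
    (hnot : ∀ u, k < u → u ≤ n → IsActive n q u → ¬MonotoneOn q (Iio u)) :
    IsIntervalWord (n + 1) k (insertMin 0 q) where
  strictMonoOn := strictMonoOn_insertMin_Iio_succ_zero hq
  exists_gt := ⟨n, by grind [insertMin]⟩
  not_isActive u hu hun h := by
    rw [isActive_insertMin_iff_of_lt (by omega) hun] at h
    refine hnot (u - 1) (by omega) (by omega) h.1 ?_
    grind [MonotoneOn]

theorem isIntervalWord_insertMin_succ (hq : StrictMonoOn q (Iio k)) (hi : i < k)
    (hgt : ∃ z, k ≤ z ∧ z < n ∧ q 0 < q z)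
    (hnot : ∀ u, k < u → u ≤ n → IsActive n q u → ¬MonotoneOn q (Ico (i + 1) u)) :
    IsIntervalWord (n + 1) i (insertMin (i + 1) q) where
  strictMonoOn := strictMonoOn_insertMin_Iio hq hi
  exists_gt := by
    obtain ⟨z, _, _, _⟩ := hgt
    exact ⟨z + 1, by grind [insertMin, unskipAt]⟩
  not_isActive u hu hun h := by
    obtain ⟨z, hkz, hzn, hz⟩ := hgt
    rw [isActive_insertMin_iff_of_lt (by omega) hun] at h
    obtain ⟨hactive, -, hmono, hright⟩ := h
    rcases le_or_gt (u - 1) k with huk | hku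
    · exact (hright 0 z (by omega) (by omega) hzn).not_gt hz
    · exact hnot (u - 1) hku (by omega) hactive hmono

namespace IsSplitWord

theorem insertMin_succ (h : IsSplitWord n j s q) :
    IsSplitWord (n + 1) j (s + 1) (insertMin (j + 1) q) where
  lt_site := by have := h.lt_site; omega
  site_le := by have := h.site_le; omega
  strictMonoOn_left := strictMonoOn_insertMin_Iio h.strictMonoOn_left le_rfl
  strictMonoOn_middle := strictMonoOn_insertMin_Ico h.strictMonoOn_middle
  middle_lt := by grind [insertMin, unskipAt]
  lt_middle := by
    have := h.lt_middle
    have := h.lt_site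
    grind [insertMin, unskipAt]
  right_lt z hz hzn := by
    have := h.right_lt (z - 1)
    have := h.lt_site
    grind [insertMin, unskipAt]
  isActive := by
    have hs := h.lt_site
    have hsn := h.site_le
    rw [isActive_insertMin_iff_of_lt (by omega) (by omega)]
    refine ⟨h.isActive, h.strictMonoOn_left.monotoneOn, h.strictMonoOn_middle.monotoneOn,
      fun a c ha hc hcn => ?_⟩
    have := h.strictMonoOn_left.monotoneOn (Nat.zero_lt_succ j) ha (Nat.zero_le a)
    have := h.right_lt c hc hcn
    omega
  not_isActive u hu hun hus hactive := by
    have hs := h.lt_site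
    have hsn := h.site_le
    rw [isActive_insertMin_iff_of_lt hu hun] at hactive
    obtain ⟨hactive, -, -, hright⟩ := hactive
    rcases (show j + 1 ≤ u - 1 by omega).eq_or_lt with hju | hju
    · exact (hright 0 (s - 1) (by omega) (by omega) (by omega)).not_gt h.lt_middle
    · exact h.not_isActive _ hju (by omega) (by omega) hactive

theorem insertMin_site (h : IsSplitWord n j s q) :
    IsSplitWord (n + 1) j s (insertMin s q) where
  lt_site := h.lt_site
  site_le := by have := h.site_le; omega
  strictMonoOn_left a ha b hb hab := by
    have := h.strictMonoOn_left ha hb hab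
    have := h.lt_site
    grind [insertMin, unskipAt]
  strictMonoOn_middle a ha b hb hab := by
    have := h.strictMonoOn_middle ha hb hab
    grind [insertMin, unskipAt]
  middle_lt := by
    have := h.middle_lt
    have := h.lt_site
    grind [insertMin, unskipAt]
  lt_middle := by
    have := h.lt_middle
    have := h.lt_site
    grind [insertMin, unskipAt]
  right_lt z hz hzn := by
    have := h.right_lt (z - 1)
    have := h.lt_site
    grind [insertMin, unskipAt]
  isActive := (isActive_insertMin_iff_of_le h.site_le le_rfl).2 h.isActive
  not_isActive u hu hun hus hactive := by
    rcases hus.lt_or_gt with hlt | hgt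
    · rw [isActive_insertMin_iff_of_le h.site_le hlt.le] at hactive
      exact h.not_isActive u hu (hlt.le.trans h.site_le) hus hactive
    · have hs := h.lt_site
      rw [isActive_insertMin_iff_of_lt hgt hun] at hactive
      have := hactive.2.1 (show 0 < s by omega) (show j + 1 < s by omega)
      exact (this (by omega)).not_gt h.middle_lt

end IsSplitWord

namespace IsDoubleWord

theorem lt_left (h : IsDoubleWord n j b q) {a c : ℕ} (ha : a ≤ j) (hc : j < c) (hcn : c < n) :
    q c < q a :=
  (h.lt_zero c hc hcn).trans_le <|
    h.strictMonoOn_left.monotoneOn (Nat.zero_lt_succ j) (Nat.lt_succ_of_le ha) (Nat.zero_le a)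

theorem isActive (h : IsDoubleWord n j b q) (hv : v ≤ j + b + 2) : IsActive n q v := by
  intro x y z hxy hyz hzn
  have := @h.strictMonoOn_left x
  have := @h.strictMonoOn_left y
  have := @h.strictMonoOn_middle x
  have := @h.strictMonoOn_middle y
  have := h.lt_left (a := x) (c := y)
  have := h.lt_left (a := x) (c := z)
  have := h.lt_left (a := y) (c := z)
  grind

theorem isSplitWord_insertMin (h : IsDoubleWord n j b q) (hi : i < j) :
    IsSplitWord (n + 1) i (j + 2) (insertMin (i + 1) q) where
  lt_site := by omega
  site_le := by have := h.le_length; omega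
  strictMonoOn_left := strictMonoOn_insertMin_Iio h.strictMonoOn_left (by omega)
  strictMonoOn_middle :=
    strictMonoOn_insertMin_Ico (h.strictMonoOn_left.mono fun a ha => ha.2)
  middle_lt := by grind [insertMin, unskipAt]
  lt_middle := by
    have := h.strictMonoOn_left (Nat.zero_lt_succ j) (Nat.lt_succ_self j) (by omega)
    grind [insertMin, unskipAt]
  right_lt z hz hzn := by
    have := h.lt_zero (z - 1)
    grind [insertMin, unskipAt]
  isActive := by
    have hn := h.le_length
    rw [isActive_insertMin_iff_of_lt (by omega) (by omega)]
    exact ⟨h.isActive (by omega),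
      h.strictMonoOn_left.monotoneOn.mono fun a (ha : a < i + 1) => ha.trans (by omega),
      h.strictMonoOn_left.monotoneOn.mono fun a ha => ha.2,
      fun a c ha hc hcn => (h.lt_left (by omega) hc hcn).le⟩
  not_isActive u hu hun hus hactive := by
    have hn := h.le_length
    rw [isActive_insertMin_iff_of_lt hu hun] at hactive
    obtain ⟨-, -, hmono, hright⟩ := hactive
    rcases hus.lt_or_gt with hlt | hgt
    · exact (hright 0 j (by omega) (by omega) (by omega)).not_gt <|
        h.strictMonoOn_left (Nat.zero_lt_succ j) (Nat.lt_succ_self j) (by omega)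
    · exact (hmono ⟨hi, by omega⟩ ⟨by omega, by omega⟩ (Nat.le_succ j)).not_gt <|
        h.lt_left le_rfl (Nat.lt_succ_self j) (by omega)

theorem insertMin_succ (h : IsDoubleWord n j b q) :
    IsDoubleWord (n + 1) j (b + 1) (insertMin (j + 1) q) where
  le_length := by have := h.le_length; omega
  strictMonoOn_left := strictMonoOn_insertMin_Iio h.strictMonoOn_left le_rfl
  strictMonoOn_middle := strictMonoOn_insertMin_Ico h.strictMonoOn_middle
  lt_zero z hz hzn := by
    have := h.lt_zero (z - 1)
    grind [insertMin, unskipAt]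
  not_isActive u hu hun hactive := by
    rw [isActive_insertMin_iff_of_lt (by omega) hun] at hactive
    exact h.not_isActive (u - 1) (by omega) (by omega) hactive.1

theorem insertMin_middle (h : IsDoubleWord n j b q) (hi : i ≤ b) :
    IsDoubleWord (n + 1) j i (insertMin (j + 2 + i) q) where
  le_length := by have := h.le_length; omega
  strictMonoOn_left x hx y hy hxy := by
    have := h.strictMonoOn_left hx hy hxy
    grind [insertMin, unskipAt]
  strictMonoOn_middle x hx y hy hxy := by
    have := @h.strictMonoOn_middle x
    grind [insertMin, unskipAt]
  lt_zero z hz hzn := by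
    have := h.le_length
    have := h.lt_zero (unskipAt (j + 2 + i) z)
    grind [insertMin, unskipAt]
  not_isActive u hu hun hactive := by
    have hn := h.le_length
    rw [isActive_insertMin_iff_of_lt (by omega) hun] at hactive
    exact (hactive.2.1 (show j < j + 2 + i by omega) (show j + 1 < j + 2 + i by omega)
      (Nat.le_succ j)).not_gt (h.lt_left le_rfl (Nat.lt_succ_self j) (by omega))

end IsDoubleWord

theorem isSplitWord_insertMin_of_strictMonoOn (hq : StrictMonoOn q (Iio n)) (hi : i + 1 < n) :
    IsSplitWord (n + 1) i (n + 1) (insertMin (i + 1) q) where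
  lt_site := by omega
  site_le := le_rfl
  strictMonoOn_left := strictMonoOn_insertMin_Iio hq (by omega)
  strictMonoOn_middle := strictMonoOn_insertMin_Ico (hq.mono fun a ha => ha.2)
  middle_lt := by grind [insertMin, unskipAt]
  lt_middle := by
    have := @hq 0 (by grind) (n - 1) (by grind) (by omega)
    grind [insertMin, unskipAt]
  right_lt z hz hzn := by omega
  isActive := by
    rw [isActive_insertMin_iff_of_lt (by omega) le_rfl]
    exact ⟨isActive_of_strictMonoOn hq le_rfl,
      hq.monotoneOn.mono fun a (ha : a < i + 1) => ha.trans hi,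
      hq.monotoneOn.mono fun a ha => ha.2, fun a c _ _ _ => by omega⟩
  not_isActive u hu hun hus hactive := by
    rw [isActive_insertMin_iff_of_lt hu hun] at hactive
    exact (hactive.2.2.2 0 (n - 1) (by omega) (by omega) (by omega)).not_gt <|
      hq (show 0 < n by omega) (show n - 1 < n by omega) (by omega)

theorem isDoubleWord_insertMin_of_strictMonoOn (hq : StrictMonoOn q (Iio (n + 1))) :
    IsDoubleWord (n + 2) n 0 (insertMin (n + 1) q) where
  le_length := le_rfl
  strictMonoOn_left := strictMonoOn_insertMin_Iio hq le_rfl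
  strictMonoOn_middle a ha b hb hab := by grind
  lt_zero z hz hzn := by grind [insertMin, unskipAt]
  not_isActive u hu hun := by omega

end Words

/-! ### The labelled tree -/

/-- The labels of the generating tree; the parameters have the same meaning as in
`IsIntervalWord`, `IsSplitWord` and `IsDoubleWord`, and `increasing n` stands for the increasing
word of length `n`. The detached site of a split word does not influence the subtree below it and is
dropped. -/
inductive WordLabel
  | interval (k : ℕ)
  | split (j : ℕ)
  | double (j b : ℕ)
  | increasing (n : ℕ)

namespace WordLabel

open Multiset in
/-- The succession rule of the generating tree. -/
def children : WordLabel → Multiset WordLabel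
  | interval k => interval (k + 1) ::ₘ (range (k + 1)).map interval
  | split j => split j ::ₘ interval (j + 1) ::ₘ split j ::ₘ (range j).map interval
  | double j b => (interval (j + 1) ::ₘ double j (b + 1) ::ₘ (range j).map split) +
      (range (b + 1)).map (double j)
  | increasing 0 => {increasing 1}
  | increasing (n + 1) => increasing (n + 2) ::ₘ double n 0 ::ₘ (range n).map split

end WordLabel

open Classical in
/-- The children of the word `w.2` of length `w.1`: one for each active site. -/
noncomputable def wordChildren (w : ℕ × (ℕ → ℕ)) : Multiset (ℕ × (ℕ → ℕ)) :=
  ((Multiset.range (w.1 + 1)).filter (IsActive w.1 w.2)).map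
    fun v => (w.1 + 1, insertMin v w.2)

/-- The word `w.2` of length `w.1` has the given label. -/
def HasLabel (w : ℕ × (ℕ → ℕ)) : WordLabel → Prop
  | .interval k => IsIntervalWord w.1 k w.2
  | .split j => ∃ s, IsSplitWord w.1 j s w.2
  | .double j b => IsDoubleWord w.1 j b w.2
  | .increasing m => w.1 = m ∧ StrictMonoOn w.2 (Set.Iio m)

section WordChildren

variable {n k j b s : ℕ} {q : ℕ → ℕ}

theorem wordChildren_eq_map {t : Multiset ℕ} (ht : t.Nodup)
    (hmem : ∀ u, u ∈ t ↔ u ≤ n ∧ IsActive n q u) :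
    wordChildren (n, q) = t.map fun v => (n + 1, insertMin v q) := by
  classical
  refine congrArg (Multiset.map _) ?_
  refine (Multiset.Nodup.ext ((Multiset.nodup_range _).filter _) ht).2 fun u => ?_
  rw [Multiset.mem_filter, Multiset.mem_range, Nat.lt_succ_iff]
  exact (hmem u).symm

theorem wordChildren_eq_map_range (hk : k ≤ n) (hactive : ∀ u ≤ k, IsActive n q u)
    (hnot : ∀ u, k < u → u ≤ n → ¬IsActive n q u) :
    wordChildren (n, q) = (Multiset.range (k + 1)).map fun v => (n + 1, insertMin v q) := by
  refine wordChildren_eq_map (Multiset.nodup_range _) fun u => ?_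
  rw [Multiset.mem_range]
  grind

theorem rel_wordChildren_interval (h : IsIntervalWord n k q) :
    Multiset.Rel HasLabel (wordChildren (n, q)) (WordLabel.interval k).children := by
  obtain ⟨z, hkz, hzn, hz⟩ := h.exists_gt
  rw [wordChildren_eq_map_range (k := k + 1) (by omega)
    (fun u => isActive_of_strictMonoOn h.strictMonoOn) h.not_isActive,
    multiset_range_succ_eq_cons_map, Multiset.map_cons, Multiset.map_map]
  refine .cons ?_ (multiset_rel_map_map_range fun i hi => ?_)
  · exact isIntervalWord_insertMin_zero (by omega) h.strictMonoOn
      fun u hku hun hu => absurd hu (h.not_isActive u hku hun)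
  · exact isIntervalWord_insertMin_succ h.strictMonoOn hi ⟨z, hkz, hzn, hz⟩
      fun u hku hun hu => absurd hu (h.not_isActive u hku hun)

theorem rel_wordChildren_split (h : IsSplitWord n j s q) :
    Multiset.Rel HasLabel (wordChildren (n, q)) (WordLabel.split j).children := by
  have hjs := h.lt_site
  have hsn := h.site_le
  have hsites : wordChildren (n, q) =
      (s ::ₘ Multiset.range (j + 2)).map fun v => (n + 1, insertMin v q) := by
    have hnodup : (s ::ₘ Multiset.range (j + 2)).Nodup :=
      Multiset.nodup_cons.2 ⟨Multiset.mem_range.not.2 (by omega), Multiset.nodup_range _⟩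
    refine wordChildren_eq_map hnodup fun u => ?_
    have := isActive_of_strictMonoOn (n := n) (v := u) h.strictMonoOn_left
    have := h.isActive
    have := h.not_isActive u
    rw [Multiset.mem_cons, Multiset.mem_range]
    grind
  rw [hsites, multiset_range_add_two]
  simp only [Multiset.map_cons, Multiset.map_map]
  refine .cons ⟨s, h.insertMin_site⟩ <| .cons ?_ <| .cons ⟨s + 1, h.insertMin_succ⟩ <|
    multiset_rel_map_map_range fun i hi => ?_
  · refine isIntervalWord_insertMin_zero (by omega) h.strictMonoOn_left
      fun u hju _ _ hmono => ?_
    exact (hmono (show 0 < u by omega) hju (Nat.zero_le _)).not_gt h.middle_lt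
  · refine isIntervalWord_insertMin_succ h.strictMonoOn_left (by omega)
      ⟨s - 1, by omega, by omega, h.lt_middle⟩ fun u hju _ _ hmono => ?_
    have hle := hmono ⟨hi, by omega⟩ ⟨by omega, hju⟩ (Nat.le_succ j)
    have := h.strictMonoOn_left.monotoneOn (Nat.zero_lt_succ j) (Nat.lt_succ_self j) j.zero_le
    exact hle.not_gt (h.middle_lt.trans_le this)

theorem rel_wordChildren_double (h : IsDoubleWord n j b q) :
    Multiset.Rel HasLabel (wordChildren (n, q)) (WordLabel.double j b).children := by
  have hn := h.le_length
  rw [wordChildren_eq_map_range h.le_length (fun _ => h.isActive) h.not_isActive,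
    show j + b + 2 + 1 = j + 2 + (b + 1) by ring, Multiset.range_add, Multiset.map_add,
    multiset_range_add_two]
  simp only [Multiset.map_cons, Multiset.map_map]
  refine .add (.cons ?_ <| .cons h.insertMin_succ <| multiset_rel_map_map_range fun i hi => ?_)
    (multiset_rel_map_map_range fun i hi => ?_)
  · refine isIntervalWord_insertMin_zero (by omega) h.strictMonoOn_left
      fun u hju _ _ hmono => ?_
    exact (hmono (show 0 < u by omega) hju (Nat.zero_le _)).not_gt
      (h.lt_zero _ (Nat.lt_succ_self j) (by omega))
  · exact ⟨j + 2, h.isSplitWord_insertMin hi⟩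
  · exact h.insertMin_middle (Nat.le_of_lt_succ hi)

theorem rel_wordChildren_increasing (hq : StrictMonoOn q (Set.Iio n)) :
    Multiset.Rel HasLabel (wordChildren (n, q)) (WordLabel.increasing n).children := by
  rw [wordChildren_eq_map_range le_rfl (fun _ => isActive_of_strictMonoOn hq)
    (fun u hu hun => absurd hun hu.not_ge)]
  have hzero : HasLabel (n + 1, insertMin 0 q) (.increasing (n + 1)) :=
    ⟨rfl, strictMonoOn_insertMin_Iio_succ_zero hq⟩
  cases n with
  | zero => exact .cons hzero .zero
  | succ n =>
    rw [multiset_range_add_two]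
    simp only [Multiset.map_cons, Multiset.map_map]
    refine .cons hzero <| .cons ?_ <| multiset_rel_map_map_range fun i hi => ?_
    · exact isDoubleWord_insertMin_of_strictMonoOn hq
    · exact ⟨n + 2, isSplitWord_insertMin_of_strictMonoOn hq (Nat.succ_lt_succ hi)⟩

theorem rel_wordChildren {w : ℕ × (ℕ → ℕ)} {l : WordLabel} (h : HasLabel w l) :
    Multiset.Rel HasLabel (wordChildren w) l.children := by
  cases l with
  | interval k => exact rel_wordChildren_interval h
  | split j => obtain ⟨s, hs⟩ := h; exact rel_wordChildren_split hs
  | double j b => exact rel_wordChildren_double h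
  | increasing m => obtain ⟨rfl, hq⟩ := h; exact rel_wordChildren_increasing hq

end WordChildren

/-! ### Patterns in permutations -/

section Patterns

open Function

variable {n k : ℕ} {π : Equiv.Perm (Fin n)} {σ τ : Fin k → Fin k}

theorem containsPattern_iff_exists_strictMono (hl : LeftInverse τ σ) (hr : RightInverse τ σ) :
    ContainsPattern π σ ↔ ∃ f : Fin k → Fin n, StrictMono f ∧ StrictMono (π ∘ f ∘ τ) := by
  constructor
  · rintro ⟨f, hf⟩
    refine ⟨f, f.strictMono, fun a b hab => (hf (τ a) (τ b)).1 ?_⟩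
    rwa [hr a, hr b]
  · rintro ⟨f, hf, hπ⟩
    refine ⟨OrderEmbedding.ofStrictMono f hf, fun a b => ?_⟩
    have := hπ.lt_iff_lt (a := σ a) (b := σ b)
    rw [comp_apply, comp_apply, comp_apply, comp_apply, hl a, hl b] at this
    exact this.symm

theorem containsPattern_inv_iff (hl : LeftInverse τ σ) (hr : RightInverse τ σ) :
    ContainsPattern π⁻¹ τ ↔ ContainsPattern π σ := by
  rw [containsPattern_iff_exists_strictMono hr hl, containsPattern_iff_exists_strictMono hl hr]
  constructor
  · rintro ⟨f, hf, hπ⟩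
    refine ⟨⇑π⁻¹ ∘ f ∘ σ, hπ, ?_⟩
    convert hf using 1
    ext a
    simp [hr a]
  · rintro ⟨f, hf, hπ⟩
    refine ⟨π ∘ f ∘ τ, hπ, ?_⟩
    convert hf using 1
    ext a
    simp [hl a]

theorem containsPattern_revPerm_mul_iff :
    ContainsPattern (Fin.revPerm * π) (Fin.rev ∘ σ) ↔ ContainsPattern π σ := by
  refine exists_congr fun f => ?_
  rw [forall_comm]
  simp [Fin.rev_lt_rev]

/-- The word of `π`, continued by the identity beyond the length of `π` so that it commutes with
inserting a new minimum; see `permWord_insertMinPerm`. -/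
def permWord (π : Equiv.Perm (Fin n)) (a : ℕ) : ℕ := if h : a < n then π ⟨a, h⟩ else a

theorem permWord_val (π : Equiv.Perm (Fin n)) (a : Fin n) : permWord π a = π a := by
  simp [permWord]

theorem strictMono_fin_four_iff {α : Type*} [Preorder α] {f : Fin 4 → α} :
    StrictMono f ↔ f 0 < f 1 ∧ f 1 < f 2 ∧ f 2 < f 3 := by
  simp [Fin.strictMono_iff_lt_succ, Fin.forall_fin_succ]

theorem containsPattern_four_iff {σ τ : Fin 4 → Fin 4} (hl : LeftInverse τ σ)
    (hr : RightInverse τ σ) :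
    ContainsPattern π σ ↔ ∃ a b c d, a < b ∧ b < c ∧ c < d ∧ d < n ∧
      StrictMono (permWord π ∘ ![a, b, c, d] ∘ τ) := by
  rw [containsPattern_iff_exists_strictMono hl hr]
  constructor
  · rintro ⟨f, hf, hπ⟩
    refine ⟨f 0, f 1, f 2, f 3, hf (by decide), hf (by decide), hf (by decide), (f 3).2, ?_⟩
    have hval : ![(f 0 : ℕ), f 1, f 2, f 3] = fun i => (f i : ℕ) := by
      ext i; fin_cases i <;> rfl
    rw [hval]
    intro i j hij
    simpa [permWord_val] using hπ hij
  · rintro ⟨a, b, c, d, hab, hbc, hcd, hdn, hπ⟩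
    refine ⟨![⟨a, by omega⟩, ⟨b, by omega⟩, ⟨c, by omega⟩, ⟨d, hdn⟩], ?_, fun i j hij => ?_⟩
    · simp [Fin.strictMono_iff_lt_succ, Fin.forall_fin_succ, hab, hbc, hcd]
    · have hval (x : Fin 4) : ![a, b, c, d] x =
          ((![⟨a, by omega⟩, ⟨b, by omega⟩, ⟨c, by omega⟩, ⟨d, hdn⟩] : Fin 4 → Fin n) x : ℕ) := by
        fin_cases x <;> rfl
      have := hπ hij
      simpa only [comp_apply, hval, permWord_val, Fin.val_fin_lt] using this

theorem avoidsTriple_permWord_iff : AvoidsTriple n (permWord π) ↔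
    ∀ σ ∈ ({![3, 2, 1, 0], ![1, 3, 2, 0], ![2, 1, 0, 3]} : Set (Fin 4 → Fin 4)),
      ¬ContainsPattern π σ := by
  simp only [Set.mem_insert_iff, Set.mem_singleton_iff, forall_eq_or_imp, forall_eq,
    containsPattern_four_iff (σ := ![3, 2, 1, 0]) (τ := ![3, 2, 1, 0]) (by decide) (by decide),
    containsPattern_four_iff (σ := ![1, 3, 2, 0]) (τ := ![3, 0, 2, 1]) (by decide) (by decide),
    containsPattern_four_iff (σ := ![2, 1, 0, 3]) (τ := ![2, 1, 0, 3]) (by decide) (by decide)]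
  simp only [strictMono_fin_four_iff, comp_apply, Matrix.cons_val]
  constructor
  · intro h
    exact ⟨fun ⟨a, b, c, d, hab, hbc, hcd, hdn, h4321⟩ => (h a b c d hab hbc hcd hdn).1 h4321,
      fun ⟨a, b, c, d, hab, hbc, hcd, hdn, h2431⟩ => (h a b c d hab hbc hcd hdn).2.1 h2431,
      fun ⟨a, b, c, d, hab, hbc, hcd, hdn, h3214⟩ => (h a b c d hab hbc hcd hdn).2.2 h3214⟩
  · rintro ⟨h4321, h2431, h3214⟩ a b c d hab hbc hcd hdn
    exact ⟨fun h => h4321 ⟨a, b, c, d, hab, hbc, hcd, hdn, h⟩,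
      fun h => h2431 ⟨a, b, c, d, hab, hbc, hcd, hdn, h⟩,
      fun h => h3214 ⟨a, b, c, d, hab, hbc, hcd, hdn, h⟩⟩

end Patterns

section InsertMinPerm

open Finset

variable {n : ℕ}

/-- The permutation obtained from `π` by raising all values by one and inserting the value `0` at
position `v`. -/
def insertMinPerm (v : Fin (n + 1)) (π : Equiv.Perm (Fin n)) : Equiv.Perm (Fin (n + 1)) :=
  (finSuccEquiv' v).trans (π.optionCongr.trans (finSuccEquiv' 0).symm)

theorem insertMinPerm_self (v : Fin (n + 1)) (π : Equiv.Perm (Fin n)) :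
    insertMinPerm v π v = 0 := by
  simp [insertMinPerm]

theorem insertMinPerm_succAbove (v : Fin (n + 1)) (π : Equiv.Perm (Fin n)) (a : Fin n) :
    insertMinPerm v π (v.succAbove a) = (π a).succ := by
  simp [insertMinPerm]

theorem insertMinPerm_bijective :
    Function.Bijective fun x : Fin (n + 1) × Equiv.Perm (Fin n) => insertMinPerm x.1 x.2 := by
  rw [Fintype.bijective_iff_injective_and_card]
  constructor
  · rintro ⟨v, π⟩ ⟨u, ρ⟩ (h : insertMinPerm v π = insertMinPerm u ρ)
    have hvu : v = u := (insertMinPerm u ρ).injective <| by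
      rw [← h, insertMinPerm_self, h, insertMinPerm_self]
    subst hvu
    have hπρ : π = ρ := Equiv.ext fun a => Fin.succ_injective n <| by
      rw [← insertMinPerm_succAbove v, h, insertMinPerm_succAbove]
    rw [hπρ]
  · simp [Fintype.card_perm, Nat.factorial_succ]

theorem permWord_insertMinPerm (v : Fin (n + 1)) (π : Equiv.Perm (Fin n)) :
    permWord (insertMinPerm v π) = insertMin v (permWord π) := by
  funext a
  by_cases ha : a < n + 1
  · rw [show a = ((⟨a, ha⟩ : Fin (n + 1)) : ℕ) from rfl, permWord_val]
    rcases Fin.eq_self_or_eq_succAbove v ⟨a, ha⟩ with hav | ⟨b, hab⟩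
    · rw [hav, insertMinPerm_self, insertMin_self, Fin.val_zero]
    · have hskip : ((v.succAbove b : Fin (n + 1)) : ℕ) = skipAt v b := by
        simp only [Fin.succAbove, skipAt, Fin.lt_def, Fin.val_castSucc]
        split_ifs <;> rfl
      rw [hab, insertMinPerm_succAbove, hskip, insertMin_skipAt, permWord_val, Fin.val_succ]
  · grind [permWord, insertMin, unskipAt]

open Classical in
theorem levelCount_wordChildren_succ (m n : ℕ) (q : ℕ → ℕ) :
    levelCount wordChildren (m + 1) (n, q) = ∑ v : Fin (n + 1),
      if IsActive n q v then levelCount wordChildren m (n + 1, insertMin v q) else 0 := by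
  rw [Fin.sum_univ_eq_sum_range (fun v => if IsActive n q v then
    levelCount wordChildren m (n + 1, insertMin v q) else 0), ← sum_filter, levelCount,
    wordChildren, Multiset.map_map]
  rfl

open Classical in
theorem sum_avoidsTriple_levelCount_succ (n m : ℕ) :
    (∑ π : Equiv.Perm (Fin (n + 1)) with AvoidsTriple (n + 1) (permWord π),
      levelCount wordChildren m (n + 1, permWord π)) =
    ∑ π : Equiv.Perm (Fin n) with AvoidsTriple n (permWord π),
      levelCount wordChildren (m + 1) (n, permWord π) := by
  rw [sum_filter, ← insertMinPerm_bijective.sum_comp, Fintype.sum_prod_type_right, sum_filter]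
  refine sum_congr rfl fun π _ => ?_
  simp only [permWord_insertMinPerm, levelCount_wordChildren_succ,
    avoidsTriple_insertMin_iff (Nat.le_of_lt_succ (Fin.is_lt _)), ite_and]
  split_ifs with h
  · rfl
  · exact sum_const_zero

open Classical in
theorem sum_avoidsTriple_levelCount (n : ℕ) : ∀ m,
    (∑ π : Equiv.Perm (Fin n) with AvoidsTriple n (permWord π),
      levelCount wordChildren m (n, permWord π)) = levelCount wordChildren (n + m) (0, id) := by
  induction n with
  | zero =>
    intro m
    have hword : permWord (default : Equiv.Perm (Fin 0)) = id := by ext a; simp [permWord]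
    have havoid : AvoidsTriple 0 id := fun a b c d _ _ _ hd => absurd hd d.not_lt_zero
    rw [sum_filter, Fintype.sum_unique, hword, if_pos havoid, zero_add]
  | succ n ih =>
    intro m
    rw [sum_avoidsTriple_levelCount_succ, ih, Nat.add_right_comm, Nat.add_assoc]

theorem card_avoidsTriple_eq_levelCount (n : ℕ) :
    Nat.card {π : Equiv.Perm (Fin n) // AvoidsTriple n (permWord π)} =
      levelCount WordLabel.children n (.increasing 0) := by
  classical
  have hroot : HasLabel (0, id) (.increasing 0) := ⟨rfl, strictMono_id.strictMonoOn _⟩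
  rw [← levelCount_eq_of_rel (fun _ _ => rel_wordChildren) n _ _ hroot, ← Nat.add_zero n,
    ← sum_avoidsTriple_levelCount, Nat.card_eq_fintype_card, Fintype.card_subtype, card_eq_sum_ones]
  rfl

open Function in
theorem avoiderCount_eq_levelCount (n : ℕ) :
    avoiderCount {![0, 1, 2, 3], ![0, 3, 1, 2], ![1, 2, 3, 0]} n =
      levelCount WordLabel.children n (.increasing 0) := by
  rw [← card_avoidsTriple_eq_levelCount]
  refine Nat.card_congr <|
    ((Equiv.mulLeft Fin.revPerm).trans (Equiv.inv _)).subtypeEquiv fun π => ?_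
  have hpattern {σ τ : Fin 4 → Fin 4} (hl : LeftInverse τ (Fin.rev ∘ σ))
      (hr : RightInverse τ (Fin.rev ∘ σ)) :
      ContainsPattern π σ ↔ ContainsPattern (Fin.revPerm * π)⁻¹ τ := by
    rw [containsPattern_inv_iff hl hr, containsPattern_revPerm_mul_iff]
  simp only [Equiv.trans_apply, Equiv.coe_mulLeft, Equiv.inv_apply, avoidsTriple_permWord_iff,
    Set.mem_insert_iff, Set.mem_singleton_iff, forall_eq_or_imp, forall_eq]
  rw [hpattern (σ := ![0, 1, 2, 3]) (τ := ![3, 2, 1, 0]) (by decide) (by decide),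
    hpattern (σ := ![0, 3, 1, 2]) (τ := ![1, 3, 2, 0]) (by decide) (by decide),
    hpattern (σ := ![1, 2, 3, 0]) (τ := ![2, 1, 0, 3]) (by decide) (by decide)]

end InsertMinPerm

/-! ### Solution of the label equations -/

section Solution

open WordLabel

variable {R : Type*} [CommRing R] {x c u w : R}

/-- The factor `c⁻² + x c`, where `c⁻¹ = 1 - x c`, by which the partial sums of the `split` labels
differ from those of the `interval` labels; see `mul_sum_split`. -/
def splitCoeff (x c : R) : R := (1 - x * c) ^ 2 + x * c

/-- The factor of the solution at `double j b` that does not depend on `b`. -/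
def doubleCoeff (x c u : R) (j : ℕ) : R :=
  1 + u * (c ^ j - 1) * splitCoeff x c + x * c ^ (j + 3)

/-- The part of the solution at `increasing (n + 1)` that does not depend on `n`. -/
def increasingConst (x c u w : R) : R := w * c * (1 - u * splitCoeff x c)

/-- The coefficient of `c ^ n` in the solution at `increasing (n + 1)`. -/
def increasingCoeff (x c u : R) : R := c * (u * splitCoeff x c * c + (c - 1) * x * c ^ 3)

/-- The closed form of the label generating functions, for `c = 1 + x c²`, `u = (1 - 2x)⁻¹` and
`w = (1 - x)⁻¹`. -/
def labelSolution (x c u w : R) : WordLabel → R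
  | interval k => c ^ (k + 2)
  | split j => u * (c ^ j + x * c ^ (j + 3))
  | double j b => c ^ (b + 2) * doubleCoeff x c u j
  | increasing 0 => 1 + x * (increasingConst x c u w + increasingCoeff x c u)
  | increasing (n + 1) => increasingConst x c u w + increasingCoeff x c u * c ^ n

/-- The equation at `l` expressing that `f` assigns to each label the generating function, by depth
and in the variable `x`, of the subtree below it. -/
def SatisfiesTreeEquation (x : R) (f : WordLabel → R) (l : WordLabel) : Prop :=
  f l = 1 + x * (l.children.map f).sum

theorem mul_sum_interval (hc : x * c ^ 2 - c + 1 = 0) (k : ℕ) :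
    x * ((Multiset.range k).map fun i => c ^ (i + 2)).sum = c ^ k - 1 := by
  induction k with
  | zero => simp
  | succ k ih =>
    rw [Multiset.range_succ, Multiset.map_cons, Multiset.sum_cons, mul_add, ih]
    linear_combination c ^ k * hc

theorem mul_sum_split (hc : x * c ^ 2 - c + 1 = 0) (k : ℕ) :
    x * ((Multiset.range k).map fun i => u * (c ^ i + x * c ^ (i + 3))).sum =
      u * (c ^ k - 1) * splitCoeff x c := by
  induction k with
  | zero => simp
  | succ k ih =>
    rw [Multiset.range_succ, Multiset.map_cons, Multiset.sum_cons, mul_add, ih, splitCoeff]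
    linear_combination (u * c ^ k * (1 + x)) * hc

theorem satisfiesTreeEquation_interval (hc : x * c ^ 2 - c + 1 = 0) (k : ℕ) :
    SatisfiesTreeEquation x (labelSolution x c u w) (interval k) := by
  simp only [SatisfiesTreeEquation, children, Multiset.map_cons, Multiset.sum_cons,
    Multiset.map_map, Function.comp_def, labelSolution]
  linear_combination (-c ^ (k + 1)) * hc - mul_sum_interval hc (k + 1)

theorem satisfiesTreeEquation_split (hc : x * c ^ 2 - c + 1 = 0) (hu : u * (1 - 2 * x) = 1)
    (j : ℕ) : SatisfiesTreeEquation x (labelSolution x c u w) (split j) := by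
  simp only [SatisfiesTreeEquation, children, Multiset.map_cons, Multiset.sum_cons,
    Multiset.map_map, Function.comp_def, labelSolution]
  linear_combination (c ^ j + x * c ^ (j + 3)) * hu - mul_sum_interval hc j

theorem satisfiesTreeEquation_double (hc : x * c ^ 2 - c + 1 = 0) (j b : ℕ) :
    SatisfiesTreeEquation x (labelSolution x c u w) (double j b) := by
  simp only [SatisfiesTreeEquation, children, Multiset.map_add, Multiset.sum_add,
    Multiset.map_cons, Multiset.sum_cons, Multiset.map_map, Function.comp_def, labelSolution,
    Multiset.sum_map_mul_right]
  have hj : x * c ^ (j + 1 + 2) + u * (c ^ j - 1) * splitCoeff x c = doubleCoeff x c u j - 1 := by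
    unfold doubleCoeff; ring
  linear_combination (-c ^ (b + 1) * doubleCoeff x c u j) * hc - hj - mul_sum_split (u := u) hc j
    - doubleCoeff x c u j * mul_sum_interval hc (b + 1)

theorem satisfiesTreeEquation_increasing (hc : x * c ^ 2 - c + 1 = 0) (hw : w * (1 - x) = 1)
    (n : ℕ) : SatisfiesTreeEquation x (labelSolution x c u w) (increasing n) := by
  cases n with
  | zero =>
    simp [SatisfiesTreeEquation, children, labelSolution]
  | succ n =>
    simp only [SatisfiesTreeEquation, children, Multiset.map_cons, Multiset.sum_cons,
      Multiset.map_map, Function.comp_def, labelSolution, doubleCoeff, increasingConst,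
      increasingCoeff]
    have hsplit := mul_sum_split (u := u) hc n
    generalize splitCoeff x c = p at hsplit ⊢
    linear_combination (c * (1 - u * p)) * hw
      - (u * p * c + (c - 1) * x * c ^ 3) * c ^ n * hc
      - (1 + u * (c ^ n - 1) * p + x * c ^ (n + 3)) * hc - hsplit

theorem satisfiesTreeEquation_labelSolution (hc : x * c ^ 2 - c + 1 = 0) (hu : u * (1 - 2 * x) = 1)
    (hw : w * (1 - x) = 1) : ∀ l, SatisfiesTreeEquation x (labelSolution x c u w) l
  | interval k => satisfiesTreeEquation_interval hc k
  | split j => satisfiesTreeEquation_split hc hu j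
  | double j b => satisfiesTreeEquation_double hc j b
  | increasing n => satisfiesTreeEquation_increasing hc hw n

theorem labelSolution_increasing_zero_eq (hc : x * c ^ 2 - c + 1 = 0) (hu : u * (1 - 2 * x) = 1)
    (hw : w * (1 - x) = 1) :
    x ^ 2 * (1 - x) * (1 - 2 * x) * labelSolution x c u w (increasing 0) =
      (1 - 7 * x + 18 * x ^ 2 - 19 * x ^ 3 + 6 * x ^ 4) * c
        - (1 - 6 * x + 12 * x ^ 2 - 8 * x ^ 3 + x ^ 4) := by
  have hconst : (1 - x) * (1 - 2 * x) * increasingConst x c u w =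
      c * ((1 - 2 * x) - splitCoeff x c) := by
    unfold increasingConst
    linear_combination c * ((1 - 2 * x) - u * (1 - 2 * x) * splitCoeff x c) * hw
      - c * splitCoeff x c * hu
  have hcoeff : (1 - x) * (1 - 2 * x) * increasingCoeff x c u =
      (1 - x) * c * (splitCoeff x c * c + (1 - 2 * x) * (c - 1) * x * c ^ 3) := by
    unfold increasingCoeff
    linear_combination (1 - x) * c * splitCoeff x c * c * hu
  unfold splitCoeff at hconst hcoeff
  rw [labelSolution]
  linear_combination x ^ 3 * hconst + x ^ 3 * hcoeff + (1 - 6 * x + x * c + 13 * x ^ 2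
    - 5 * x ^ 2 * c + x ^ 2 * c ^ 2 - 11 * x ^ 3 + 8 * x ^ 3 * c - 4 * x ^ 3 * c ^ 2
    + x ^ 3 * c ^ 3 + 3 * x ^ 4 - 5 * x ^ 4 * c + 6 * x ^ 4 * c ^ 2 - 3 * x ^ 4 * c ^ 3
    - 3 * x ^ 5 * c ^ 2 + 2 * x ^ 5 * c ^ 3) * hc

end Solution

theorem X_mul_catalanGF_sq : X * catalanGF ^ 2 - catalanGF + 1 = 0 := by
  have hmap : catalanSeries.map (Nat.castRingHom ℚ) = catalanGF := by ext n; simp [catalanGF]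
  have h := congrArg (PowerSeries.map (Nat.castRingHom ℚ)) catalanSeries_sq_mul_X_add_one
  simp only [map_add, map_mul, map_pow, map_one, PowerSeries.map_X, hmap] at h
  linear_combination h

theorem statement_15 :
    (X : PowerSeries ℚ)^2 * (1 - X) * (1 - 2*X) * avoiderGF ({![0,1,2,3], ![0,3,1,2], ![1,2,3,0]} : Set (Fin 4 → Fin 4)) =
      (1 - 7*X + 18*X^2 - 19*X^3 + 6*X^4) * catalanGF - (1 - 6*X + 12*X^2 - 8*X^3 + X^4) := by
  have hu : (1 - 2 * X : PowerSeries ℚ)⁻¹ * (1 - 2 * X) = 1 :=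
    PowerSeries.inv_mul_cancel _ (by simp)
  have hw : (1 - X : PowerSeries ℚ)⁻¹ * (1 - X) = 1 :=
    PowerSeries.inv_mul_cancel _ (by simp)
  have hGF : avoiderGF {![0, 1, 2, 3], ![0, 3, 1, 2], ![1, 2, 3, 0]} =
      labelSolution X catalanGF (1 - 2 * X)⁻¹ (1 - X)⁻¹ (.increasing 0) := by
    ext n
    rw [coeff_eq_levelCount (satisfiesTreeEquation_labelSolution X_mul_catalanGF_sq hu hw),
      avoiderGF, coeff_mk, avoiderCount_eq_levelCount]
  rw [hGF, labelSolution_increasing_zero_eq X_mul_catalanGF_sq hu hw]
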